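/- Let X be a locally compact, Hausdorff, second countable, totally disconnected topological space, let n ≥ 1, and let p, q ∈ C₀(X, Mₙ(ℂ)) be projections (p = p* = p² and q = q* = q², with operations pointwise). Then p and q are Murray–von Neumann equivalent, i.e. there exists v ∈ C₀(X, Mₙ(ℂ)) with v* v = p and v v* = q, if and only if trace(p(x)) = trace(q(x)) for every x ∈ X. -/

import Mathlib

/-!
A projection vanishing at infinity has compact open support `K`, because a nonzero projection has
norm at least one, so only the behaviour on `K` matters.

Two matrix projections with equal traces have ranges of equal dimension, and an isometry between
the ranges implements a Murray–von Neumann equivalence `v₀` from `p x₀` to `q x₀`. The cut-down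
`w x = q x * v₀ * p x` is an equivalence at `x₀` and depends continuously on `x`, and the polar
part `w (w⋆w + (1 - p))^(-1/2)` turns it into an equivalence from `p x` to `q x` as long as
`w⋆w + (1 - p)` and `ww⋆ + (1 - q)` are both invertible. Since both equal `1` at `x₀`, this holds
near `x₀`. As `K` is totally disconnected, finitely many of these local equivalences can be glued
along clopen sets, without any compatibility between them.
-/

open Filter Topology

section Equivalence

/-- `v` implements a Murray–von Neumann equivalence from `p` to `q`. The elements `p` and `q` are
not required to be projections, so that the predicate makes sense in any `⋆`-semigroup. -/
structure ImplementsMvN {A : Type*} [Mul A] [Star A] (v p q : A) : Prop where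
  star_mul_self : star v * v = p
  mul_star_self : v * star v = q

protected theorem ImplementsMvN.star {A : Type*} [Mul A] [InvolutiveStar A] {v p q : A}
    (h : ImplementsMvN v p q) : ImplementsMvN (star v) q p :=
  ⟨by rw [star_star, h.mul_star_self], by rw [star_star, h.star_mul_self]⟩

theorem ImplementsMvN.mul_mul {A : Type*} [Semigroup A] [StarMul A] {v p q : A}
    (h : ImplementsMvN v p q) (hp : IsStarProjection p) (hq : IsStarProjection q) :
    ImplementsMvN (q * v * p) p q := by
  have hcut : q * v * p = v * p := by
    rw [← h.mul_star_self, mul_assoc v, h.star_mul_self, mul_assoc, hp.isIdempotentElem.eq]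
  refine ⟨?_, ?_⟩
  · calc star (q * v * p) * (q * v * p) = p * (star v * v) * p := by
          rw [hcut, star_mul, hp.isSelfAdjoint.star_eq]; simp only [mul_assoc]
      _ = p := by rw [h.star_mul_self, hp.isIdempotentElem.eq, hp.isIdempotentElem.eq]
  · calc q * v * p * star (q * v * p) = v * (p * p) * star v := by
          rw [hcut, star_mul, hp.isSelfAdjoint.star_eq]; simp only [mul_assoc]
      _ = v * (star v * v) * star v := by rw [hp.isIdempotentElem.eq, h.star_mul_self]
      _ = (v * star v) * (v * star v) := by simp only [mul_assoc]
      _ = q := by rw [h.mul_star_self, hq.isIdempotentElem.eq]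

end Equivalence

section CompletedGram

variable {A : Type*} [Ring A] [StarRing A] {p w : A}

/-- The element `w⋆w + (1 - p)`. For a projection `p` with `w p = w` it is the Gram element of `w`
on the range of `p`, completed by the identity on the complement so that it can be invertible. -/
def completedGram (p w : A) : A :=
  star w * w + (1 - p)

theorem completedGram_eq_one (h : star w * w = p) : completedGram p w = 1 := by
  rw [completedGram, h, add_sub_cancel]

theorem completedGram_mul (hp : IsIdempotentElem p) (hw : w * p = w) :
    completedGram p w * p = star w * w := by
  rw [completedGram, add_mul, hp.one_sub_mul_self, mul_assoc, hw, add_zero]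

theorem mul_completedGram (hp : IsStarProjection p) (hw : w * p = w) :
    p * completedGram p w = star w * w := by
  have hpw : p * star w = star w := by
    rw [← hp.isSelfAdjoint.star_eq, ← star_mul, hw]
  rw [completedGram, mul_add, hp.mul_one_sub_self, ← mul_assoc, hpw, add_zero]

theorem completedGram_nonneg [PartialOrder A] [StarOrderedRing A] (hp : IsStarProjection p) :
    0 ≤ completedGram p w :=
  add_nonneg (star_mul_self_nonneg w) hp.one_sub.nonneg

theorem continuous_completedGram [TopologicalSpace A] [IsTopologicalRing A] [ContinuousStar A]
    {X : Type*} [TopologicalSpace X] {p w : X → A} (hp : Continuous p) (hw : Continuous w) :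
    Continuous fun x ↦ completedGram (p x) (w x) :=
  (hw.star.mul hw).add (continuous_const.sub hp)

end CompletedGram

section PolarPart

variable {A : Type*} [CStarAlgebra A] [PartialOrder A] [StarOrderedRing A] {p q w : A}

/-- The polar part `w (w⋆w + (1 - p))^(-1/2)` of an element with `w p = w`, where `p` is a
projection. It is `0` when `w⋆w + (1 - p)` is not invertible. -/
noncomputable def polarPart (p w : A) : A :=
  w * Ring.inverse (CFC.sqrt (completedGram p w))

theorem polarPart_mul_sqrt (hp : IsStarProjection p) (ha : IsUnit (completedGram p w)) :
    polarPart p w * CFC.sqrt (completedGram p w) = w :=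
  Ring.inverse_mul_cancel_right _ _
    ((CFC.isUnit_sqrt_iff _ (completedGram_nonneg hp)).2 ha)

theorem commute_sqrt_completedGram (hp : IsStarProjection p) (hw : w * p = w) :
    Commute (CFC.sqrt (completedGram p w)) p :=
  have hgram : Commute (completedGram p w) p :=
    (completedGram_mul hp.isIdempotentElem hw).trans (mul_completedGram hp hw).symm
  hgram.cfcₙ_nnreal _

theorem star_polarPart_mul_polarPart (hp : IsStarProjection p) (hw : w * p = w)
    (ha : IsUnit (completedGram p w)) : star (polarPart p w) * polarPart p w = p := by
  have hcomm := commute_sqrt_completedGram hp hw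
  have hss := CFC.sqrt_mul_sqrt_self _ (completedGram_nonneg (w := w) hp)
  have hs : IsUnit (CFC.sqrt (completedGram p w)) :=
    (CFC.isUnit_sqrt_iff _ (completedGram_nonneg hp)).2 ha
  have hstar : star (CFC.sqrt (completedGram p w)) = CFC.sqrt (completedGram p w) :=
    (CFC.sqrt_nonneg _).isSelfAdjoint.star_eq
  rw [polarPart]
  generalize CFC.sqrt (completedGram p w) = s at *
  calc star (w * Ring.inverse s) * (w * Ring.inverse s)
      = Ring.inverse s * (completedGram p w * p) * Ring.inverse s := by
        rw [star_mul, ← Ring.inverse_star, hstar, completedGram_mul hp.isIdempotentElem hw]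
        simp only [mul_assoc]
    _ = Ring.inverse s * s * (s * p) * Ring.inverse s := by
        rw [← hss]; simp only [mul_assoc]
    _ = p * (s * Ring.inverse s) := by
        rw [Ring.inverse_mul_cancel _ hs, one_mul, hcomm.eq, mul_assoc]
    _ = p := by rw [Ring.mul_inverse_cancel _ hs, mul_one]

theorem polarPart_mul_star_polarPart (hp : IsStarProjection p) (hq : IsStarProjection q)
    (hwp : w * p = w) (hqw : q * w = w) (ha : IsUnit (completedGram p w))
    (hb : IsUnit (completedGram q (star w))) : polarPart p w * star (polarPart p w) = q := by
  have hfix : polarPart p w * star (polarPart p w) * w = w := by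
    calc polarPart p w * star (polarPart p w) * w
        = polarPart p w * (star (polarPart p w) * polarPart p w) *
            CFC.sqrt (completedGram p w) := by
          rw [mul_assoc _ (star _ * _), mul_assoc (star _), polarPart_mul_sqrt hp ha, mul_assoc]
      _ = polarPart p w * CFC.sqrt (completedGram p w) * p := by
          rw [star_polarPart_mul_polarPart hp hwp ha, mul_assoc,
            ← (commute_sqrt_completedGram hp hwp).eq, mul_assoc]
      _ = w := by rw [polarPart_mul_sqrt hp ha, hwp]
  have hvq : star (polarPart p w) * q = star (polarPart p w) := by
    rw [← hq.isSelfAdjoint.star_eq, ← star_mul, polarPart, ← mul_assoc, hqw]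
  -- `completedGram q (star w)` is `ww⋆ + (1 - q)`, so it suffices to compare on `w` and `1 - q`.
  refine hb.mul_right_cancel ?_
  calc polarPart p w * star (polarPart p w) * completedGram q (star w)
      = polarPart p w * star (polarPart p w) * w * star w := by
        rw [completedGram, star_star, mul_add, mul_assoc _ _ (1 - q), mul_sub, mul_one, hvq,
          sub_self, mul_zero, add_zero, mul_assoc _ w]
    _ = q * w * star w := by rw [hfix, hqw]
    _ = q * completedGram q (star w) := by
        rw [completedGram, star_star, mul_add, hq.mul_one_sub_self, add_zero, mul_assoc]

theorem continuousAt_polarPart {X : Type*} [TopologicalSpace X] {p w : X → A} {x : X}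
    (hpc : Continuous p) (hp : ∀ x, IsStarProjection (p x)) (hwc : Continuous w)
    (ha : IsUnit (completedGram (p x) (w x))) :
    ContinuousAt (fun x ↦ polarPart (p x) (w x)) x := by
  have hs : Continuous fun x ↦ CFC.sqrt (completedGram (p x) (w x)) :=
    CFC.continuousOn_sqrt.comp_continuous (continuous_completedGram hpc hwc)
      fun x ↦ completedGram_nonneg (hp x)
  obtain ⟨s, hs_eq⟩ := (CFC.isUnit_sqrt_iff _ (completedGram_nonneg (hp x))).2 ha
  have hinv : ContinuousAt Ring.inverse (CFC.sqrt (completedGram (p x) (w x))) :=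
    hs_eq ▸ NormedRing.inverse_continuousAt s
  exact hwc.continuousAt.mul (hinv.comp_of_eq hs.continuousAt rfl)

end PolarPart

section Local

theorem eventually_isUnit_completedGram {X A : Type*} [TopologicalSpace X] [NormedRing A]
    [HasSummableGeomSeries A] [StarRing A] [ContinuousStar A] {p w : X → A} {x₀ : X}
    (hp : Continuous p) (hw : Continuous w) (h : star (w x₀) * w x₀ = p x₀) :
    ∀ᶠ x in 𝓝 x₀, IsUnit (completedGram (p x) (w x)) := by
  refine (continuous_completedGram hp hw).continuousAt.eventually (Units.isOpen.mem_nhds ?_)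
  change IsUnit (completedGram (p x₀) (w x₀))
  rw [completedGram_eq_one h]
  exact isUnit_one

variable {X A : Type*} [TopologicalSpace X] [CStarAlgebra A] {p q : X → A}

theorem ImplementsMvN.exists_eventually_continuousAt {x₀ : X} {v₀ : A}
    (h : ImplementsMvN v₀ (p x₀) (q x₀))
    (hpc : Continuous p) (hp : ∀ x, IsStarProjection (p x))
    (hqc : Continuous q) (hq : ∀ x, IsStarProjection (q x)) :
    ∃ v : X → A, ∀ᶠ x in 𝓝 x₀, ContinuousAt v x ∧ ImplementsMvN (v x) (p x) (q x) := by
  let _ := CStarAlgebra.spectralOrder A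
  let _ := CStarAlgebra.spectralOrderedRing A
  let w : X → A := fun x ↦ q x * v₀ * p x
  have hw₀ : ImplementsMvN (w x₀) (p x₀) (q x₀) := h.mul_mul (hp x₀) (hq x₀)
  have hwc : Continuous w := by fun_prop
  have hunit_p : ∀ᶠ x in 𝓝 x₀, IsUnit (completedGram (p x) (w x)) :=
    eventually_isUnit_completedGram hpc hwc hw₀.star_mul_self
  have hunit_q : ∀ᶠ x in 𝓝 x₀, IsUnit (completedGram (q x) (star (w x))) :=
    eventually_isUnit_completedGram hqc hwc.star hw₀.star.star_mul_self
  refine ⟨fun x ↦ polarPart (p x) (w x), ?_⟩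
  filter_upwards [hunit_p, hunit_q] with x ha hb
  have hwp : w x * p x = w x := by simp only [w, mul_assoc, (hp x).isIdempotentElem.eq]
  have hqw : q x * w x = w x := by simp only [w, ← mul_assoc, (hq x).isIdempotentElem.eq]
  exact ⟨continuousAt_polarPart hpc hp hwc ha, star_polarPart_mul_polarPart (hp x) hwp ha,
    polarPart_mul_star_polarPart (hp x) (hq x) hwp hqw ha hb⟩

end Local

section Gluing

variable {X Y : Type*} [TopologicalSpace X] [TopologicalSpace Y] [T2Space X]
  [TotallyDisconnectedSpace X] {K : Set X}

theorem exists_isClopen_mem_subset_of_isCompact_of_isOpen (hK : IsCompact K) (hKo : IsOpen K)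
    {x : X} (hx : x ∈ K) {U : Set X} (hU : U ∈ 𝓝 x) : ∃ V, IsClopen V ∧ x ∈ V ∧ V ⊆ U := by
  have : CompactSpace K := isCompact_iff_compactSpace.1 hK
  obtain ⟨V, hV, hxV, hVU⟩ := compact_exists_isClopen_in_isOpen
    (isOpen_interior.preimage continuous_subtype_val : IsOpen (Subtype.val ⁻¹' interior U))
    (show (⟨x, hx⟩ : K) ∈ Subtype.val ⁻¹' interior U from mem_interior_iff_mem_nhds.2 hU)
  refine ⟨(↑) '' V, ⟨?_, ?_⟩, ⟨⟨x, hx⟩, hxV, rfl⟩, ?_⟩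
  · exact hK.isClosed.isClosedEmbedding_subtypeVal.isClosedMap _ hV.isClosed
  · exact hKo.isOpenEmbedding_subtypeVal.isOpenMap _ hV.isOpen
  · exact Set.image_subset_iff.2 fun y hy ↦ interior_subset (s := U) (hVU hy)

theorem exists_forall_mem_continuousAt_of_isCompact_of_isOpen (hK : IsCompact K) (hKo : IsOpen K)
    [Nonempty Y] {R : X → Y → Prop}
    (h : ∀ x₀ ∈ K, ∃ v : X → Y, ∀ᶠ x in 𝓝 x₀, ContinuousAt v x ∧ R x (v x)) :
    ∃ v : X → Y, ∀ x ∈ K, ContinuousAt v x ∧ R x (v x) := by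
  classical
  suffices ∃ U, IsClopen U ∧ K ⊆ U ∧ ∃ v : X → Y, ∀ x ∈ U, ContinuousAt v x ∧ R x (v x) by
    obtain ⟨U, -, hKU, v, hv⟩ := this
    exact ⟨v, fun x hx ↦ hv x (hKU hx)⟩
  refine hK.induction_on (p := fun s ↦ ∃ U, IsClopen U ∧ s ⊆ U ∧
    ∃ v : X → Y, ∀ x ∈ U, ContinuousAt v x ∧ R x (v x)) ?_ ?_ ?_ ?_
  · exact ⟨∅, isClopen_empty, subset_rfl, fun _ ↦ Classical.arbitrary Y, by simp⟩
  · rintro s t hst ⟨U, hU, htU, hv⟩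
    exact ⟨U, hU, hst.trans htU, hv⟩
  · rintro s t ⟨U, hU, hsU, u, hu⟩ ⟨V, hV, htV, v, hv⟩
    refine ⟨U ∪ V, hU.union hV, Set.union_subset_union hsU htV, U.piecewise u v, fun x hx ↦ ?_⟩
    by_cases hxU : x ∈ U
    · have huv : U.piecewise u v =ᶠ[𝓝 x] u :=
        (U.piecewise_eqOn u v).eventuallyEq_of_mem (hU.isOpen.mem_nhds hxU)
      exact ⟨(hu x hxU).1.congr huv.symm, by simpa only [huv.eq_of_nhds] using (hu x hxU).2⟩
    · have huv : U.piecewise u v =ᶠ[𝓝 x] v :=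
        (U.piecewise_eqOn_compl u v).eventuallyEq_of_mem (hU.compl.isOpen.mem_nhds hxU)
      have hxv := hv x (hx.resolve_left hxU)
      exact ⟨hxv.1.congr huv.symm, by simpa only [huv.eq_of_nhds] using hxv.2⟩
  · intro x hx
    obtain ⟨v, hv⟩ := h x hx
    obtain ⟨V, hV, hxV, hVv⟩ := exists_isClopen_mem_subset_of_isCompact_of_isOpen hK hKo hx hv
    exact ⟨V, mem_nhdsWithin_of_mem_nhds (hV.isOpen.mem_nhds hxV), V, hV, subset_rfl, v,
      fun y hy ↦ hVv hy⟩

end Gluing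

section VanishingAtInfinity

variable {X A : Type*} [TopologicalSpace X]

theorem one_le_norm_of_isStarProjection [NonUnitalNormedRing A] [StarRing A] [CStarRing A] {p : A}
    (hp : IsStarProjection p) (h0 : p ≠ 0) : 1 ≤ ‖p‖ := by
  have hsq : ‖p‖ * ‖p‖ = ‖p‖ := by
    rw [← CStarRing.norm_star_mul_self, hp.isSelfAdjoint.star_eq, hp.isIdempotentElem.eq]
  exact (mul_right_cancel₀ (norm_ne_zero_iff.2 h0) (hsq.trans (one_mul _).symm)).ge

theorem isClopen_support_of_isStarProjection [NonUnitalNormedRing A] [StarRing A] [CStarRing A]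
    {p : X → A} (hpc : Continuous p) (hp : ∀ x, IsStarProjection (p x)) :
    IsClopen p.support := by
  have hsupp : p.support = {x | 1 ≤ ‖p x‖} := by
    ext x
    refine ⟨one_le_norm_of_isStarProjection (hp x), fun hx h0 ↦ ?_⟩
    rw [Set.mem_ofPred_eq, h0, norm_zero] at hx
    exact zero_lt_one.not_ge hx
  exact ⟨hsupp ▸ isClosed_le continuous_const hpc.norm, hpc.isOpen_support⟩

theorem isCompact_support_of_isStarProjection [NonUnitalNormedRing A] [StarRing A] [CStarRing A]
    {p : X → A} (hpc : Continuous p) (hp0 : Tendsto p (cocompact X) (𝓝 0))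
    (hp : ∀ x, IsStarProjection (p x)) : IsCompact p.support := by
  have hsmall : ∀ᶠ x in cocompact X, ‖p x‖ < 1 := by
    simpa using hp0.norm.eventually_lt_const (by simp : ‖(0 : A)‖ < 1)
  obtain ⟨t, ht, hts⟩ := mem_cocompact.1 hsmall
  refine ht.of_isClosed_subset (isClopen_support_of_isStarProjection hpc hp).isClosed fun x hx ↦ ?_
  by_contra hxt
  exact (one_le_norm_of_isStarProjection (hp x) hx).not_gt (hts hxt)

theorem exists_continuous_tendsto_zero_implementsMvN [T2Space X] [TotallyDisconnectedSpace X]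
    [CStarAlgebra A] {p q : X → A}
    (hpc : Continuous p) (hp0 : Tendsto p (cocompact X) (𝓝 0)) (hp : ∀ x, IsStarProjection (p x))
    (hqc : Continuous q) (hq : ∀ x, IsStarProjection (q x))
    (h : ∀ x, ∃ v, ImplementsMvN v (p x) (q x)) :
    ∃ v : X → A, Continuous v ∧ Tendsto v (cocompact X) (𝓝 0) ∧
      ∀ x, ImplementsMvN (v x) (p x) (q x) := by
  have hK := isCompact_support_of_isStarProjection hpc hp0 hp
  have hKo := isClopen_support_of_isStarProjection hpc hp
  have hlocal : ∀ x₀ ∈ p.support, ∃ v : X → A,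
      ∀ᶠ x in 𝓝 x₀, ContinuousAt v x ∧ ImplementsMvN (v x) (p x) (q x) := fun x₀ _ ↦
    (h x₀).elim fun v₀ hv₀ ↦ hv₀.exists_eventually_continuousAt hpc hp hqc hq
  obtain ⟨v, hv⟩ := exists_forall_mem_continuousAt_of_isCompact_of_isOpen hK hKo.isOpen
    (R := fun x a ↦ ImplementsMvN a (p x) (q x)) hlocal
  refine ⟨p.support.indicator v, ?_, ?_, fun x ↦ ?_⟩
  · refine continuous_indicator (by simp [hKo.frontier_eq]) ?_
    rw [hKo.isClosed.closure_eq]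
    exact fun x hx ↦ (hv x hx).1.continuousWithinAt
  · refine tendsto_const_nhds.congr' ?_
    filter_upwards [hK.compl_mem_cocompact] with x hx
    exact (Set.indicator_of_notMem hx v).symm
  · by_cases hx : x ∈ p.support
    · rw [Set.indicator_of_mem hx]
      exact (hv x hx).2
    · obtain ⟨u, hu⟩ := h x
      have hpx : p x = 0 := Function.notMem_support.1 hx
      have hu0 : u = 0 := (CStarRing.star_mul_self_eq_zero_iff u).1 (hu.star_mul_self.trans hpx)
      rwa [Set.indicator_of_notMem hx, ← hu0]

end VanishingAtInfinity

section MatrixProjections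

theorem implementsMvN_starProjection {𝕜 E : Type*} [RCLike 𝕜] [NormedAddCommGroup E]
    [InnerProductSpace 𝕜 E] [CompleteSpace E] {K L : Submodule 𝕜 E} [CompleteSpace K]
    [CompleteSpace L] (e : K ≃ₗᵢ[𝕜] L) :
    ImplementsMvN (L.subtypeL ∘L (e : K →L[𝕜] L) ∘L K.orthogonalProjectionOnto)
      K.starProjection L.starProjection := by
  have hadj : star (L.subtypeL ∘L (e : K →L[𝕜] L) ∘L K.orthogonalProjectionOnto) =
      K.subtypeL ∘L (e.symm : L →L[𝕜] K) ∘L L.orthogonalProjectionOnto := by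
    simp only [ContinuousLinearMap.star_eq_adjoint, ContinuousLinearMap.adjoint_comp,
      Submodule.adjoint_subtypeL, Submodule.adjoint_orthogonalProjectionOnto,
      LinearIsometryEquiv.adjoint_eq_symm, ContinuousLinearMap.comp_assoc]
  constructor <;> rw [hadj] <;> ext x <;> simp

variable {𝕜 : Type*} [RCLike 𝕜]

theorem exists_implementsMvN_of_finrank_range_eq {E : Type*} [NormedAddCommGroup E]
    [InnerProductSpace 𝕜 E] [FiniteDimensional 𝕜 E] [CompleteSpace E] {P Q : E →L[𝕜] E}
    (hP : IsStarProjection P) (hQ : IsStarProjection Q)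
    (h : Module.finrank 𝕜 P.range = Module.finrank 𝕜 Q.range) :
    ∃ V, ImplementsMvN V P Q := by
  obtain ⟨_, hP'⟩ := isStarProjection_iff_eq_starProjection_range.1 hP
  obtain ⟨_, hQ'⟩ := isStarProjection_iff_eq_starProjection_range.1 hQ
  let e : P.range ≃ₗᵢ[𝕜] Q.range :=
    (stdOrthonormalBasis 𝕜 P.range).equiv (stdOrthonormalBasis 𝕜 Q.range) (finCongr h)
  exact ⟨_, hP'.symm ▸ hQ'.symm ▸ implementsMvN_starProjection e⟩

variable {m : Type*} [Fintype m]

theorem trace_eq_finrank_range_toEuclideanCLM [DecidableEq m] {P : Matrix m m 𝕜}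
    (hP : IsIdempotentElem P) :
    P.trace = Module.finrank 𝕜 (Matrix.toEuclideanCLM (n := m) (𝕜 := 𝕜) P).range := by
  have hidem : IsIdempotentElem (Matrix.toEuclideanLin P) := by
    rw [← Matrix.coe_toEuclideanCLM_eq_toEuclideanLin,
      ContinuousLinearMap.isIdempotentElem_toLinearMap_iff]
    exact hP.map Matrix.toEuclideanCLM
  rw [Matrix.coe_toEuclideanCLM_eq_toEuclideanLin,
    ← (LinearMap.IsIdempotentElem.isProj_range _ hidem).trace,
    Matrix.toEuclideanLin_eq_toLin_orthonormal, Matrix.trace_toLin_eq]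

theorem exists_implementsMvN_iff_trace_eq {P Q : Matrix m m 𝕜} (hP : IsStarProjection P)
    (hQ : IsStarProjection Q) : (∃ V, ImplementsMvN V P Q) ↔ P.trace = Q.trace := by
  classical
  refine ⟨?_, fun htr ↦ ?_⟩
  · rintro ⟨V, hV⟩
    rw [← hV.star_mul_self, ← hV.mul_star_self, Matrix.trace_mul_comm]
  · let Φ := Matrix.toEuclideanCLM (n := m) (𝕜 := 𝕜)
    rw [trace_eq_finrank_range_toEuclideanCLM hP.isIdempotentElem,
      trace_eq_finrank_range_toEuclideanCLM hQ.isIdempotentElem, Nat.cast_inj] at htr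
    obtain ⟨V, hV⟩ := exists_implementsMvN_of_finrank_range_eq (hP.map Φ) (hQ.map Φ) htr
    obtain ⟨V', rfl⟩ := EquivLike.surjective Φ V
    refine ⟨V', EquivLike.injective Φ ?_, EquivLike.injective Φ ?_⟩
    · rw [map_mul, map_star, hV.star_mul_self]
    · rw [map_mul, map_star, hV.mul_star_self]

end MatrixProjections

open scoped Matrix.Norms.L2Operator in
theorem projections_MvNEquivalent_iff_trace_eq_general {X m : Type*} [TopologicalSpace X]
    [T2Space X] [TotallyDisconnectedSpace X] [Fintype m]
    (p q : X → Matrix m m ℂ)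
    (hpcont : Continuous p) (hpzero : Tendsto p (cocompact X) (𝓝 0))
    (hp : ∀ x, IsStarProjection (p x))
    (hqcont : Continuous q) (hq : ∀ x, IsStarProjection (q x)) :
    (∃ v : X → Matrix m m ℂ, Continuous v ∧ Tendsto v (cocompact X) (𝓝 0) ∧
        (∀ x, star (v x) * v x = p x) ∧ ∀ x, v x * star (v x) = q x) ↔
      ∀ x, (p x).trace = (q x).trace := by
  classical
  have hpointwise (x : X) := exists_implementsMvN_iff_trace_eq (hp x) (hq x)
  refine ⟨?_, fun htr ↦ ?_⟩
  · rintro ⟨v, -, -, hvp, hvq⟩ x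
    exact (hpointwise x).1 ⟨v x, hvp x, hvq x⟩
  · obtain ⟨v, hvcont, hvzero, hv⟩ := exists_continuous_tendsto_zero_implementsMvN
      hpcont hpzero hp hqcont hq fun x ↦ (hpointwise x).2 (htr x)
    exact ⟨v, hvcont, hvzero, fun x ↦ (hv x).star_mul_self, fun x ↦ (hv x).mul_star_self⟩

/-- Two projections `p, q ∈ C₀(X, Mₙ(ℂ))` over a td-lcsc space `X` are
Murray–von Neumann equivalent (there is `v ∈ C₀(X, Mₙ(ℂ))` with `v* v = p` and
`v v* = q`) if and only if they have equal pointwise traces. -/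
theorem projections_MvNEquivalent_iff_trace_eq
    {X : Type*} [TopologicalSpace X]
    [LocallyCompactSpace X] [T2Space X] [SecondCountableTopology X]
    [TotallyDisconnectedSpace X]
    (n : ℕ) (hn : 1 ≤ n)
    (p q : X → Matrix (Fin n) (Fin n) ℂ)
    (hpcont : Continuous p)
    (hpzero : Filter.Tendsto p (Filter.cocompact X) (nhds 0))
    (hpidem : ∀ x, p x * p x = p x)
    (hpsa : ∀ x, star (p x) = p x)
    (hqcont : Continuous q)
    (hqzero : Filter.Tendsto q (Filter.cocompact X) (nhds 0))
    (hqidem : ∀ x, q x * q x = q x)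
    (hqsa : ∀ x, star (q x) = q x) :
    (∃ v : X → Matrix (Fin n) (Fin n) ℂ,
        Continuous v ∧ Filter.Tendsto v (Filter.cocompact X) (nhds 0) ∧
        (∀ x, star (v x) * v x = p x) ∧ (∀ x, v x * star (v x) = q x)) ↔
      ∀ x, (p x).trace = (q x).trace :=
  projections_MvNEquivalent_iff_trace_eq_general p q hpcont hpzero
    (fun x ↦ ⟨hpidem x, hpsa x⟩) hqcont fun x ↦ ⟨hqidem x, hqsa x⟩
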